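/- Fix T > 0 and (t,x) ∈ [0,T]×ℝ^d. Let b : ℝ^d → ℝ^d, ū : [0,T]×ℝ^d → ℝ^d and σ : ℝ^d → ℝ^{d×d} be continuous, with a(y) = σ(y)σ(y)ᵀ symmetric positive definite for every y, and let h : ℝ^d → ℝ. Suppose v₀ : [0,T]×ℝ^d → ℝ is of class C^{1,2} and satisfies ∂_t v₀(s,y) + ⟨b(y) − σ(y)ū(s,y), ∇_x v₀(s,y)⟩ − (1/2)‖σ(y)ᵀ∇_x v₀(s,y)‖² − ‖ū(s,y)‖² = 0 on [0,T)×ℝ^d with v₀(T,y) = 2h(y). Then for every absolutely continuous path φ : [t,T] → ℝ^d with φ(t) = x and square-integrable derivative, v₀(t,x) ≤ ∫_t^T [ (1/2)‖φ̇(s) − (b(φ(s)) − σ(φ(s))ū(s,φ(s)))‖²_{a^{-1}(φ(s))} − ‖ū(s,φ(s))‖² ] ds + 2h(φ(T)). -/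

import Mathlib

open Real Filter MeasureTheory Matrix intervalIntegral Set
open scoped BigOperators

noncomputable section

/-- Partial derivative of `f : ℝ^d → ℝ` in the `i`-th coordinate direction. -/
noncomputable def pder {d : ℕ} (i : Fin d) (f : (Fin d → ℝ) → ℝ) (x : Fin d → ℝ) : ℝ :=
  fderiv ℝ f x (Pi.single i 1)

/-- Spatial gradient `∇_x f`. -/
noncomputable def gradv {d : ℕ} (f : (Fin d → ℝ) → ℝ) (x : Fin d → ℝ) : Fin d → ℝ :=
  fun i => pder i f x

/-- Spatial Hessian `∇²_x f`. -/
noncomputable def hessm {d : ℕ} (f : (Fin d → ℝ) → ℝ) (x : Fin d → ℝ) :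
    Matrix (Fin d) (Fin d) ℝ :=
  Matrix.of fun i j => pder i (fun y => pder j f y) x

/-- Euclidean inner product on `ℝ^d`. -/
def dotp {d : ℕ} (u v : Fin d → ℝ) : ℝ := ∑ i, u i * v i

/-- Matrix contraction `A : B = ∑_{i,j} A_{ij} B_{ij}`. -/
def mdot {d : ℕ} (A B : Matrix (Fin d) (Fin d) ℝ) : ℝ := ∑ i, ∑ j, A i j * B i j

/-- `f(t,x)` is of class `C^{1,2}` on `ℝ × ℝ^d`: continuous, continuously
differentiable in `t` and twice continuously differentiable in `x`. -/
def C12 {d : ℕ} (f : ℝ → (Fin d → ℝ) → ℝ) : Prop :=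
  Continuous (fun p : ℝ × (Fin d → ℝ) => f p.1 p.2) ∧
  (∀ x, Differentiable ℝ (fun s => f s x)) ∧
  Continuous (fun p : ℝ × (Fin d → ℝ) => deriv (fun s => f s p.2) p.1) ∧
  (∀ t, ContDiff ℝ 2 (f t)) ∧
  (∀ i, Continuous (fun p : ℝ × (Fin d → ℝ) => pder i (f p.1) p.2)) ∧
  (∀ i j, Continuous (fun p : ℝ × (Fin d → ℝ) => hessm (f p.1) p.2 i j))

/-- `f(t,x)` is of class `C^1` on `ℝ × ℝ^d`. -/
def C1 {d : ℕ} (f : ℝ → (Fin d → ℝ) → ℝ) : Prop :=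
  Continuous (fun p : ℝ × (Fin d → ℝ) => f p.1 p.2) ∧
  (∀ x, Differentiable ℝ (fun s => f s x)) ∧
  Continuous (fun p : ℝ × (Fin d → ℝ) => deriv (fun s => f s p.2) p.1) ∧
  (∀ t, Differentiable ℝ (f t)) ∧
  (∀ i, Continuous (fun p : ℝ × (Fin d → ℝ) => pder i (f p.1) p.2))

lemma aux_alg {d : ℕ} (S : Matrix (Fin d) (Fin d) ℝ) (hS : (S * Sᵀ).PosDef) (p q : Fin d → ℝ) :
    0 ≤ (1 / 2) * dotp q ((S * Sᵀ)⁻¹ *ᵥ q) + dotp q p + (1 / 2) * dotp (Sᵀ *ᵥ p) (Sᵀ *ᵥ p) := by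
  set z := (S * Sᵀ)⁻¹ *ᵥ q with hz
  have hdet : IsUnit (S * Sᵀ).det := hS.det_pos.ne'.isUnit
  have hq : q = S *ᵥ (Sᵀ *ᵥ z) := by
    rw [hz, Matrix.mulVec_mulVec, Matrix.mulVec_mulVec, Matrix.mul_nonsing_inv _ hdet,
      Matrix.one_mulVec]
  have hdp : ∀ r : Fin d → ℝ, dotp q r = dotp (Sᵀ *ᵥ z) (Sᵀ *ᵥ r) := by
    intro r
    change q ⬝ᵥ r = (Sᵀ *ᵥ z) ⬝ᵥ (Sᵀ *ᵥ r)
    rw [Matrix.dotProduct_mulVec, Matrix.vecMul_transpose, ← hq]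
  rw [hdp z, hdp p]
  have : (1 / 2) * dotp (Sᵀ *ᵥ z) (Sᵀ *ᵥ z) + dotp (Sᵀ *ᵥ z) (Sᵀ *ᵥ p)
      + (1 / 2) * dotp (Sᵀ *ᵥ p) (Sᵀ *ᵥ p)
      = ∑ i, (1 / 2) * ((Sᵀ *ᵥ z) i + (Sᵀ *ᵥ p) i) ^ 2 := by
    unfold dotp
    rw [Finset.mul_sum, Finset.mul_sum, ← Finset.sum_add_distrib, ← Finset.sum_add_distrib]
    exact Finset.sum_congr rfl fun i _ => by ring
  rw [this]
  exact Finset.sum_nonneg fun i _ => by positivity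

lemma aux_fderiv {d : ℕ} (f : (Fin d → ℝ) → ℝ) (y w : Fin d → ℝ) :
    fderiv ℝ f y w = dotp w (gradv f y) := by
  conv_lhs => rw [pi_eq_sum_univ' w]
  rw [map_sum]
  exact Finset.sum_congr rfl fun i _ => by
    rw [map_smul, smul_eq_mul]; rfl

lemma aux_strict {d : ℕ} (v : ℝ → (Fin d → ℝ) → ℝ) (hv : C12 v) (u : ℝ × (Fin d → ℝ)) :
    HasFDerivAt (fun p : ℝ × (Fin d → ℝ) => v p.1 p.2)
      ((ContinuousLinearMap.toSpanSingleton ℝ (deriv (fun s => v s u.2) u.1)).coprod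
        (fderiv ℝ (v u.1) u.2)) u := by
  obtain ⟨_, hdt, hct, hx, hcx, _⟩ := hv
  have hF : Continuous fun p : ℝ × (Fin d → ℝ) => fderiv ℝ (v p.1) p.2 := by
    rw [continuous_clm_apply]
    intro w
    simp only [aux_fderiv]
    exact continuous_finsetSum _ fun i _ => continuous_const.mul (hcx i)
  have := hasStrictFDerivAt_uncurry_coprod (𝕜 := ℝ) (u := u) (f := v)
    (f₁ := fun s y => ContinuousLinearMap.toSpanSingleton ℝ (deriv (fun s => v s y) s))
    (f₂ := fun s y => fderiv ℝ (v s) y)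
    (Eventually.of_forall fun p => (hdt p.2 p.1).hasDerivAt.hasFDerivAt)
    (Eventually.of_forall fun p =>
      (((hx p.1).differentiable (by norm_num)) p.2).hasFDerivAt)
    (by
      refine Continuous.continuousAt ?_
      rw [continuous_clm_apply]
      intro w
      simp only [Function.HasUncurry.uncurry, id, ContinuousLinearMap.toSpanSingleton_apply,
        smul_eq_mul]
      exact continuous_const.mul hct)
    hF.continuousAt
  exact this.hasFDerivAt

lemma aux_contDiff {d : ℕ} (v : ℝ → (Fin d → ℝ) → ℝ) (hv : C12 v) :
    ContDiff ℝ 1 (fun p : ℝ × (Fin d → ℝ) => v p.1 p.2) := by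
  rw [contDiff_one_iff_fderiv]
  refine ⟨fun u => (aux_strict v hv u).differentiableAt, ?_⟩
  rw [continuous_clm_apply]
  rintro ⟨r, w⟩
  have : (fun p => fderiv ℝ (fun p : ℝ × (Fin d → ℝ) => v p.1 p.2) p (r, w))
      = fun p => r * deriv (fun s => v s p.2) p.1 + dotp w (gradv (v p.1) p.2) := by
    funext p
    rw [(aux_strict v hv p).fderiv]
    simp [aux_fderiv]
  rw [this]
  obtain ⟨_, hdt, hct, hx, hcx, _⟩ := hv
  exact (continuous_const.mul hct).add
    (continuous_finsetSum _ fun i _ => continuous_const.mul (hcx i))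

lemma aux_ac {f M : ℝ → ℝ} {a b K : ℝ} (hM : AbsolutelyContinuousOnInterval M a b)
    (h : ∀ x ∈ uIcc a b, ∀ y ∈ uIcc a b, dist (f x) (f y) ≤ K * dist (M x) (M y)) :
    AbsolutelyContinuousOnInterval f a b := by
  have h2 : Tendsto _ _ _ := Tendsto.const_mul K hM
  rw [mul_zero] at h2
  refine squeeze_zero' (Eventually.of_forall fun E =>
    Finset.sum_nonneg fun _ _ => dist_nonneg) ?_ h2
  have : ∀ᶠ (E : ℕ × (ℕ → ℝ × ℝ)) in AbsolutelyContinuousOnInterval.totalLengthFilter ⊓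
      𝓟 (AbsolutelyContinuousOnInterval.disjWithin a b),
      E ∈ AbsolutelyContinuousOnInterval.disjWithin a b :=
    eventually_inf_principal.mpr (by simp)
  filter_upwards [this] with E hE
  rw [Finset.mul_sum]
  exact Finset.sum_le_sum fun i hi => h _ (hE.1 i hi).1 _ (hE.1 i hi).2

/-- absolute continuity of `s ↦ v s (φ s)` -/
lemma aux_g_ac {d : ℕ} (v : ℝ → (Fin d → ℝ) → ℝ) (hv : C12 v) {t T : ℝ} (htT : t ≤ T)
    (x : Fin d → ℝ) (φ φ' : ℝ → (Fin d → ℝ))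
    (hAC : ∀ s ∈ Set.Icc t T, φ s = x + ∫ r in t..s, φ' r)
    (hL1 : IntervalIntegrable φ' MeasureTheory.volume t T) :
    AbsolutelyContinuousOnInterval (fun s => v s (φ s)) t T := by
  have hn := hL1.norm
  have hsub : ∀ a ∈ Icc t T, ∀ b ∈ Icc t T, IntervalIntegrable φ' volume a b := by
    intro a ha b hb
    exact hL1.mono_set (by
      rw [← uIcc_of_le htT] at ha hb
      exact uIcc_subset_uIcc ha hb)
  have ht : t ∈ Icc t T := left_mem_Icc.2 htT
  have hT : T ∈ Icc t T := right_mem_Icc.2 htT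
  set N : ℝ → ℝ := fun s => ∫ r in t..s, ‖φ' r‖ with hN
  have hNdiff : ∀ a ∈ Icc t T, ∀ b ∈ Icc t T, N b - N a = ∫ r in a..b, ‖φ' r‖ := by
    intro a ha b hb
    exact intervalIntegral.integral_interval_sub_left (hsub t ht b hb).norm (hsub t ht a ha).norm
  have hφdiff : ∀ a ∈ Icc t T, ∀ b ∈ Icc t T, ‖φ b - φ a‖ ≤ |N b - N a| := by
    intro a ha b hb
    rw [hAC a ha, hAC b hb, add_sub_add_left_eq_sub,
      intervalIntegral.integral_interval_sub_left (hsub t ht b hb) (hsub t ht a ha),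
      hNdiff a ha b hb]
    exact norm_integral_le_abs_integral_norm
  have hNmono : ∀ a ∈ Icc t T, ∀ b ∈ Icc t T, a ≤ b → N a ≤ N b := by
    intro a ha b hb hab
    have := hNdiff a ha b hb
    have h0 : 0 ≤ ∫ r in a..b, ‖φ' r‖ := intervalIntegral.integral_nonneg hab fun _ _ => norm_nonneg _
    linarith
  have hNt : N t = 0 := by simp [hN]
  have hNac : AbsolutelyContinuousOnInterval N t T :=
    hn.absolutelyContinuousOnInterval_intervalIntegral (by simp)
  have hid : AbsolutelyContinuousOnInterval (fun s : ℝ => s) t T :=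
    contDiff_id.contDiffOn.absolutelyContinuousOnInterval
  have hM := hid.add hNac
  obtain ⟨K, hK⟩ := (aux_contDiff v hv).contDiffOn.exists_lipschitzOnWith
    (s := Icc t T ×ˢ Metric.closedBall x (N T)) (by norm_num)
    ((convex_Icc _ _).prod (convex_closedBall _ _)) (isCompact_Icc.prod (isCompact_closedBall _ _))
  have hφt : φ t = x := by simpa using hAC t ht
  have hmem : ∀ s ∈ Icc t T, (s, φ s) ∈ Icc t T ×ˢ Metric.closedBall x (N T) := by
    intro s hs
    refine ⟨hs, ?_⟩
    rw [Metric.mem_closedBall, dist_eq_norm]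
    have h1 := hφdiff t ht s hs
    rw [hφt, hNt, sub_zero, abs_of_nonneg (hNt ▸ hNmono t ht s hs hs.1)] at h1
    exact h1.trans (hNmono s hs T hT hs.2)
  refine aux_ac (K := K) hM ?_
  rw [uIcc_of_le htT]
  intro a ha b hb
  refine (hK.dist_le_mul _ (hmem a ha) _ (hmem b hb)).trans ?_
  refine mul_le_mul_of_nonneg_left ?_ K.2
  wlog hab : b ≤ a generalizing a b
  · rw [dist_comm, dist_comm (((fun s : ℝ => s) + N) a)]
    exact this b hb a ha (le_of_not_ge hab)
  have h1 := hφdiff b hb a ha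
  have h2 := hNmono b hb a ha hab
  rw [abs_of_nonneg (by linarith)] at h1
  rw [Prod.dist_eq, Real.dist_eq, Real.dist_eq, dist_eq_norm, abs_of_nonneg (by linarith : 0 ≤ a - b)]
  simp only [Pi.add_apply]
  rw [abs_of_nonneg (by linarith)]
  exact max_le (by linarith) (by linarith)

lemma aux_int {d : ℕ} {t T : ℝ} (φ' c : ℝ → (Fin d → ℝ)) (A : ℝ → Matrix (Fin d) (Fin d) ℝ)
    (hL1 : IntervalIntegrable φ' MeasureTheory.volume t T)
    (hL2 : IntervalIntegrable (fun s => dotp (φ' s) (φ' s)) MeasureTheory.volume t T)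
    (hc : ContinuousOn c (uIcc t T)) (hA : ContinuousOn A (uIcc t T)) :
    IntervalIntegrable (fun s => dotp (φ' s - c s) (A s *ᵥ (φ' s - c s))) volume t T := by
  have h1 : ∀ i, IntervalIntegrable (fun s => φ' s i) volume t T := by
    intro i
    rw [intervalIntegrable_iff] at hL1 ⊢
    exact (ContinuousLinearMap.proj (R := ℝ) (φ := fun _ : Fin d => ℝ) i).integrable_comp hL1
  have hci : ∀ i, ContinuousOn (fun s => c s i) (uIcc t T) := fun i =>
    (continuous_apply i).comp_continuousOn hc
  have hAij : ∀ i j, ContinuousOn (fun s => A s i j) (uIcc t T) := fun i j =>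
    (continuous_apply_apply i j).comp_continuousOn hA
  have h2 : ∀ i j, IntervalIntegrable (fun s => φ' s i * φ' s j) volume t T := by
    intro i j
    refine hL2.mono_fun ?_ (Eventually.of_forall fun s => ?_)
    · exact (h1 i).aestronglyMeasurable_restrict_uIoc.mul
        (h1 j).aestronglyMeasurable_restrict_uIoc
    · have hi : φ' s i * φ' s i ≤ dotp (φ' s) (φ' s) :=
        Finset.single_le_sum (f := fun i => φ' s i * φ' s i)
          (fun k _ => mul_self_nonneg _) (Finset.mem_univ i)
      have hj : φ' s j * φ' s j ≤ dotp (φ' s) (φ' s) :=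
        Finset.single_le_sum (f := fun i => φ' s i * φ' s i)
          (fun k _ => mul_self_nonneg _) (Finset.mem_univ j)
      simp only [Real.norm_eq_abs]
      refine le_trans ?_ (le_abs_self _)
      rw [abs_le]
      constructor <;> nlinarith [sq_nonneg (φ' s i - φ' s j), sq_nonneg (φ' s i + φ' s j)]
  have h3 : ∀ i j, IntervalIntegrable
      (fun s => (φ' s i - c s i) * (A s i j * (φ' s j - c s j))) volume t T := by
    intro i j
    have e : (fun s => (φ' s i - c s i) * (A s i j * (φ' s j - c s j))) = fun s =>
        A s i j * ((φ' s i * φ' s j - c s i * φ' s j) - (c s j * φ' s i - c s i * c s j)) := by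
      funext s; ring
    rw [e]
    exact (((h2 i j).sub ((h1 j).continuousOn_mul (hci i))).sub
      (((h1 i).continuousOn_mul (hci j)).sub
        ((hci i).mul (hci j)).intervalIntegrable)).continuousOn_mul (hAij i j)
  have e : (fun s => dotp (φ' s - c s) (A s *ᵥ (φ' s - c s))) =
      ∑ i, ∑ j, fun s => (φ' s i - c s i) * (A s i j * (φ' s j - c s j)) := by
    funext s
    simp [dotp, Matrix.mulVec, dotProduct, Finset.mul_sum]
  rw [e]
  exact IntervalIntegrable.sum _ fun i _ => IntervalIntegrable.sum _ fun j _ => h3 i j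

/-- Verification inequality: a classical solution `v₀` of the limiting
Hamilton–Jacobi equation bounds from below the cost of every absolutely continuous path
with square-integrable derivative. -/
theorem stmt_4 (d : ℕ) (T : ℝ) (hT : 0 < T) (t : ℝ) (x : Fin d → ℝ)
    (ht : 0 ≤ t) (htT : t ≤ T)
    (b : (Fin d → ℝ) → (Fin d → ℝ))
    (ubar : ℝ → (Fin d → ℝ) → (Fin d → ℝ))
    (σ : (Fin d → ℝ) → Matrix (Fin d) (Fin d) ℝ)
    (h : (Fin d → ℝ) → ℝ)
    (hb : Continuous b)
    (hubar : Continuous (fun p : ℝ × (Fin d → ℝ) => ubar p.1 p.2))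
    (hσ : Continuous σ)
    (haPD : ∀ y, (σ y * (σ y)ᵀ).PosDef)
    (v₀ : ℝ → (Fin d → ℝ) → ℝ)
    (hv₀reg : C12 v₀)
    (hv₀pde : ∀ s y, 0 ≤ s → s < T →
      deriv (fun r => v₀ r y) s
        + dotp (b y - (σ y) *ᵥ (ubar s y)) (gradv (v₀ s) y)
        - (1 / 2) * dotp ((σ y)ᵀ *ᵥ gradv (v₀ s) y) ((σ y)ᵀ *ᵥ gradv (v₀ s) y)
        - dotp (ubar s y) (ubar s y) = 0)
    (hv₀T : ∀ y, v₀ T y = 2 * h y)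
    (φ φ' : ℝ → (Fin d → ℝ))
    (hφt : φ t = x)
    (hAC : ∀ s ∈ Set.Icc t T, φ s = x + ∫ r in t..s, φ' r)
    (hL1 : IntervalIntegrable φ' MeasureTheory.volume t T)
    (hL2 : IntervalIntegrable (fun s => dotp (φ' s) (φ' s)) MeasureTheory.volume t T) :
    v₀ t x ≤
      (∫ s in t..T,
        ((1 / 2) * dotp (φ' s - (b (φ s) - (σ (φ s)) *ᵥ (ubar s (φ s))))
            ((σ (φ s) * (σ (φ s))ᵀ)⁻¹ *ᵥ (φ' s - (b (φ s) - (σ (φ s)) *ᵥ (ubar s (φ s)))))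
          - dotp (ubar s (φ s)) (ubar s (φ s))))
      + 2 * h (φ T) := by
  have hg := aux_g_ac v₀ hv₀reg htT x φ φ' hAC hL1
  have hu : uIcc t T = Icc t T := uIcc_of_le htT
  have hφc : ContinuousOn φ (uIcc t T) := by
    have h1 : ContinuousOn (fun s => x + ∫ r in t..s, φ' r) (uIcc t T) :=
      continuousOn_const.add (continuousOn_primitive_interval (by
        rw [hu]; exact (intervalIntegrable_iff_integrableOn_Icc_of_le htT).1 hL1))
    exact h1.congr fun s hs => hAC s (hu ▸ hs)
  have hpair : ContinuousOn (fun s => (s, φ s)) (uIcc t T) := continuousOn_id.prodMk hφc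
  have huc : ContinuousOn (fun s => ubar s (φ s)) (uIcc t T) := hubar.comp_continuousOn hpair
  have hcc : ContinuousOn (fun s => b (φ s) - σ (φ s) *ᵥ ubar s (φ s)) (uIcc t T) := by
    have : Continuous fun p : ℝ × (Fin d → ℝ) => b p.2 - σ p.2 *ᵥ ubar p.1 p.2 :=
      (hb.comp continuous_snd).sub ((hσ.comp continuous_snd).matrix_mulVec hubar)
    exact this.comp_continuousOn hpair
  have hinv : Continuous fun y => (σ y * (σ y)ᵀ)⁻¹ := by
    have ha : Continuous fun y => σ y * (σ y)ᵀ := hσ.matrix_mul hσ.matrix_transpose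
    simp only [Matrix.inv_def, Ring.inverse_eq_inv']
    exact (ha.matrix_det.inv₀ fun y => (haPD y).det_pos.ne').smul ha.matrix_adjugate
  have hu2 : ContinuousOn (fun s => dotp (ubar s (φ s)) (ubar s (φ s))) (uIcc t T) := by
    refine continuousOn_finsetSum _ fun i _ => ?_
    have := (continuous_apply i).comp_continuousOn huc
    exact this.mul this
  have hLint := ((aux_int φ' _ _ hL1 hL2 hcc (hinv.comp_continuousOn hφc)).const_mul (1 / 2)).sub
    hu2.intervalIntegrable
  have hftc := hg.integral_deriv_eq_sub
  have hdint := hg.intervalIntegrable_deriv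
  have hae : ∀ᵐ s ∂(volume.restrict (Icc t T)), -deriv (fun s => v₀ s (φ s)) s ≤
      ((1 / 2) * dotp (φ' s - (b (φ s) - (σ (φ s)) *ᵥ (ubar s (φ s))))
            ((σ (φ s) * (σ (φ s))ᵀ)⁻¹ *ᵥ (φ' s - (b (φ s) - (σ (φ s)) *ᵥ (ubar s (φ s)))))
          - dotp (ubar s (φ s)) (ubar s (φ s))) := by
    rw [ae_restrict_iff' measurableSet_Icc]
    have hne : ∀ r : ℝ, ∀ᵐ s : ℝ, s ≠ r := fun r => by simp [ae_iff, measure_singleton]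
    filter_upwards [hL1.ae_hasDerivAt_integral, hne t, hne T] with s hs hst hsT hmem
    have hIoo : s ∈ Ioo t T := ⟨lt_of_le_of_ne hmem.1 hst.symm, lt_of_le_of_ne hmem.2 hsT⟩
    have h1 : HasDerivAt φ (φ' s) s := by
      have := (hs (hu ▸ hmem) t (by simp)).const_add x
      refine this.congr_of_eventuallyEq ?_
      filter_upwards [isOpen_Ioo.mem_nhds hIoo] with r hr
      exact hAC r (Ioo_subset_Icc_self hr)
    have h2 := (aux_strict v₀ hv₀reg (s, φ s)).comp_hasDerivAt s ((hasDerivAt_id s).prodMk h1)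
    have h3 : deriv (fun s => v₀ s (φ s)) s =
        deriv (fun r => v₀ r (φ s)) s + dotp (φ' s) (gradv (v₀ s) (φ s)) := by
      have h4 := h2.deriv
      simp only [ContinuousLinearMap.coprod_apply, aux_fderiv,
        ContinuousLinearMap.toSpanSingleton_apply, one_smul] at h4
      exact h4
    rw [h3]
    have hp := hv₀pde s (φ s) (ht.trans hmem.1) hIoo.2
    have hal := aux_alg (σ (φ s)) (haPD (φ s)) (gradv (v₀ s) (φ s))
      (φ' s - (b (φ s) - (σ (φ s)) *ᵥ (ubar s (φ s))))
    have hsub : dotp (φ' s - (b (φ s) - (σ (φ s)) *ᵥ (ubar s (φ s)))) (gradv (v₀ s) (φ s)) =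
        dotp (φ' s) (gradv (v₀ s) (φ s)) -
          dotp (b (φ s) - (σ (φ s)) *ᵥ (ubar s (φ s))) (gradv (v₀ s) (φ s)) :=
      sub_dotProduct _ _ _
    rw [hsub] at hal
    linarith
  have hmono := integral_mono_ae_restrict htT hdint.neg hLint hae
  simp only [Pi.neg_apply, Function.comp_apply, intervalIntegral.integral_neg, hftc] at hmono
  rw [hv₀T, hφt] at hmono
  linarith
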